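/- (Weighted telescoping bound) Let Q ⊆ E be a compact convex set, ψ a differentiable σ-strongly convex prox-function on Q, f : Q → ℝ convex continuous with minimizer x* over Q, and suppose V_ψ(x*, x) ≤ R for all x ∈ Q. Let {γ_k}_{k=1}^N be positive non-increasing, fix m ≥ −1, and set ω_k^{(m)} = γ_k^{−m} if −1 ≤ m ≤ 0 and ω_k^{(m)} = k^{m/2} if m > 0. Let x^1 ∈ Q and x^{k+1} = argmin_{x ∈ Q} { ⟨∇f(x^k), x⟩ + (1/γ_k) V_ψ(x, x^k) } with ∇f(x^k) ∈ ∂f(x^k). Then ∑_{k=1}^N ω_k^{(m)} ( f(x^k) − f(x*) ) ≤ R · ω_N^{(m)}/γ_N + ∑_{k=1}^N (ω_k^{(m)} γ_k / (2σ)) ‖∇f(x^k)‖_*². -/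

import Mathlib

/-- The Bregman divergence `V_ψ(x, y) = ψ(x) − ψ(y) − ⟨∇ψ(y), x − y⟩` associated with a
differentiable function `ψ` with gradient `ψ'`. -/
noncomputable def bregman {E : Type*} [NormedAddCommGroup E] [NormedSpace ℝ E]
    (ψ : E → ℝ) (ψ' : E → E →L[ℝ] ℝ) (x y : E) : ℝ :=
  ψ x - ψ y - ψ' y (x - y)

/-- `g` is a subgradient of `f` at `x` relative to `Q`. -/
def IsSubgradientAt {E : Type*} [NormedAddCommGroup E] [NormedSpace ℝ E]
    (f : E → ℝ) (Q : Set E) (g : E →L[ℝ] ℝ) (x : E) : Prop :=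
  ∀ y ∈ Q, f x + g (y - x) ≤ f y

/-!
Optimality of `x^{k+1}` and the three-point identity bound `⟨∇f(x^k), x^{k+1} − x*⟩` by `1/γ_k`
times `V(x*, x^k) − V(x*, x^{k+1}) − V(x^{k+1}, x^k)`. The last divergence is at least
`σ/2 ‖x^{k+1} − x^k‖²`, which by Young's inequality pays for replacing `x^{k+1}` by `x^k` on the
left at the cost of `γ_k/(2σ) ‖∇f(x^k)‖_*²`. Multiplying by `ω_k` and summing, the divergences
appear with coefficients `ω_k/γ_k`; these are non-decreasing, so Abel summation together with
`V(x*, ·) ≤ R` leaves at most `R ω_N/γ_N`.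
-/

open Filter Finset Topology

theorem sum_Icc_mul_sub_succ_le_of_monotoneOn {𝕜 : Type*} [CommRing 𝕜] [PartialOrder 𝕜]
    [IsOrderedRing 𝕜] {a V : ℕ → 𝕜} {R : 𝕜} {m n : ℕ} (hmn : m ≤ n) (ha : 0 ≤ a m)
    (hmono : MonotoneOn a (Set.Icc m n)) (hV : ∀ k ∈ Set.Icc m n, V k ≤ R) :
    ∑ k ∈ Icc m n, a k * (V k - V (k + 1)) ≤ a n * (R - V (n + 1)) := by
  induction n, hmn using Nat.le_induction with
  | base =>
    simp only [Icc_self, sum_singleton]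
    gcongr
    exact hV m ⟨le_rfl, le_rfl⟩
  | succ n hmn ih =>
    have hsub : Set.Icc m n ⊆ Set.Icc m (n + 1) := Set.Icc_subset_Icc_right n.le_succ
    have hlast : n + 1 ∈ Set.Icc m (n + 1) := ⟨by lia, le_rfl⟩
    calc ∑ k ∈ Icc m (n + 1), a k * (V k - V (k + 1))
      _ = ∑ k ∈ Icc m n, a k * (V k - V (k + 1)) + a (n + 1) * (V (n + 1) - V (n + 1 + 1)) :=
        sum_Icc_succ_top (by lia) _
      _ ≤ a n * (R - V (n + 1)) + a (n + 1) * (V (n + 1) - V (n + 1 + 1)) := by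
        gcongr
        exact ih (hmono.mono hsub) fun k hk => hV k (hsub hk)
      _ ≤ a (n + 1) * (R - V (n + 1)) + a (n + 1) * (V (n + 1) - V (n + 1 + 1)) := by
        gcongr
        · exact sub_nonneg.2 (hV _ hlast)
        · exact hmono (hsub ⟨hmn, le_rfl⟩) hlast n.le_succ
      _ = a (n + 1) * (R - V (n + 1 + 1)) := by ring

theorem apply_le_add_mul_sq_norm {E : Type*} [SeminormedAddCommGroup E] [NormedSpace ℝ E]
    (g : E →L[ℝ] ℝ) (v : E) {c : ℝ} (hc : 0 < c) :
    g v ≤ c / 2 * ‖g‖ ^ 2 + 1 / (2 * c) * ‖v‖ ^ 2 := by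
  have hyoung : 2 * ‖g‖ * ‖v‖ ≤ c * ‖g‖ ^ 2 + c⁻¹ * ‖v‖ ^ 2 := two_mul_le_add_mul_sq hc
  calc g v ≤ ‖g‖ * ‖v‖ := (le_abs_self _).trans (g.le_opNorm v)
    _ ≤ (c * ‖g‖ ^ 2 + c⁻¹ * ‖v‖ ^ 2) / 2 := by linarith
    _ = c / 2 * ‖g‖ ^ 2 + 1 / (2 * c) * ‖v‖ ^ 2 := by field_simp

section MirrorDescent

variable {E : Type*} [NormedAddCommGroup E] [NormedSpace ℝ E] {Q : Set E}
  {ψ : E → ℝ} {ψ' : E → E →L[ℝ] ℝ}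

theorem bregman_three_point (ψ : E → ℝ) (ψ' : E → E →L[ℝ] ℝ) (u x y : E) :
    (ψ' y - ψ' x) (u - y) = bregman ψ ψ' u x - bregman ψ ψ' u y - bregman ψ ψ' y x := by
  simp only [bregman, sub_apply, map_sub]
  ring

theorem hasFDerivWithinAt_bregman_left {x y : E} (hψ : HasFDerivWithinAt ψ (ψ' y) Q y) :
    HasFDerivWithinAt (fun z => bregman ψ ψ' z x) (ψ' y - ψ' x) Q y :=
  (hψ.sub_const _).sub ((ψ' x).hasFDerivWithinAt.comp y ((hasFDerivWithinAt_id y Q).sub_const x)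
    (Set.mapsTo_univ _ _))

theorem le_bregman_of_uniformConvexOn {φ : ℝ → ℝ} (hψ : UniformConvexOn Q φ ψ) {x y : E}
    (hψy : HasFDerivWithinAt ψ (ψ' y) Q y) (hx : x ∈ Q) (hy : y ∈ Q) :
    φ ‖x - y‖ ≤ bregman ψ ψ' x y := by
  have hline : HasDerivWithinAt (fun t : ℝ => ψ (AffineMap.lineMap y x t)) (ψ' y (x - y))
      (Set.Ioc 0 1) 0 := by
    refine HasFDerivWithinAt.comp_hasDerivWithinAt (t := Q) 0 (by simpa using hψy)
      AffineMap.hasDerivWithinAt_lineMap fun t ht => ?_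
    exact hψ.1.lineMap_mem hy hx ⟨ht.1.le, ht.2⟩
  have hslope : Tendsto (slope (fun t : ℝ => ψ (AffineMap.lineMap y x t)) 0) (𝓝[>] 0)
      (𝓝 (ψ' y (x - y))) := by
    rw [← nhdsWithin_Ioc_eq_nhdsGT zero_lt_one]
    exact (hasDerivWithinAt_iff_tendsto_slope' (by simp)).1 hline
  have hlimit : Tendsto (fun t : ℝ => ψ x - ψ y - (1 - t) * φ ‖x - y‖) (𝓝[>] 0)
      (𝓝 (ψ x - ψ y - φ ‖x - y‖)) :=
    (Continuous.tendsto' (by fun_prop) _ _ (by ring)).mono_left nhdsWithin_le_nhds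
  have hle : ∀ᶠ t : ℝ in 𝓝[>] 0, slope (fun t : ℝ => ψ (AffineMap.lineMap y x t)) 0 t ≤
      ψ x - ψ y - (1 - t) * φ ‖x - y‖ := by
    filter_upwards [Ioc_mem_nhdsGT zero_lt_one] with t ht
    have hconv := hψ.2 hy hx (sub_nonneg.2 ht.2) ht.1.le (sub_add_cancel 1 t)
    rw [← AffineMap.lineMap_apply_module, norm_sub_rev] at hconv
    simp only [slope_def_field, AffineMap.lineMap_apply_zero, sub_zero, smul_eq_mul] at hconv ⊢
    rw [div_le_iff₀ ht.1]
    linarith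
  have hgrad := le_of_tendsto_of_tendsto hslope hlimit hle
  rw [bregman]
  linarith

/-- A mirror descent (Bregman proximal) step from `x` to `x'` over `Q`, with step size `γ` and
linearized loss `g`. As the `argmin` need not be unique for an arbitrary `ψ`, it is encoded as a
relation between `x` and `x'`. -/
def IsMirrorDescentStep (ψ : E → ℝ) (ψ' : E → E →L[ℝ] ℝ) (Q : Set E) (γ : ℝ) (g : E →L[ℝ] ℝ)
    (x x' : E) : Prop :=
  x' ∈ Q ∧ IsMinOn (fun z => g z + (1 / γ) * bregman ψ ψ' z x) Q x'

theorem IsMirrorDescentStep.apply_next_sub_le {γ : ℝ} {g : E →L[ℝ] ℝ} {x x' u : E}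
    (hstep : IsMirrorDescentStep ψ ψ' Q γ g x x') (hQ : Convex ℝ Q)
    (hψx' : HasFDerivWithinAt ψ (ψ' x') Q x') (hu : u ∈ Q) :
    g (x' - u) ≤ 1 / γ * (bregman ψ ψ' u x - bregman ψ ψ' u x' - bregman ψ ψ' x' x) := by
  obtain ⟨hx', hmin⟩ := hstep
  have hoptimal : 0 ≤ (g + (1 / γ) • (ψ' x' - ψ' x)) (u - x') :=
    hmin.localize.hasFDerivWithinAt_nonneg
      (g.hasFDerivWithinAt.add ((hasFDerivWithinAt_bregman_left hψx').const_mul (1 / γ)))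
      (sub_mem_posTangentConeAt_of_segment_subset (hQ.segment_subset hx' hu))
  rwa [add_apply, smul_apply, bregman_three_point, smul_eq_mul, ← neg_sub x' u, map_neg,
    neg_add_eq_sub, sub_nonneg] at hoptimal

theorem IsMirrorDescentStep.apply_sub_le {γ σ : ℝ} {g : E →L[ℝ] ℝ} {x x' u : E}
    (hstep : IsMirrorDescentStep ψ ψ' Q γ g x x') (hγ : 0 < γ) (hσ : 0 < σ)
    (hψ : StrongConvexOn Q σ ψ) (hψx : HasFDerivWithinAt ψ (ψ' x) Q x)
    (hψx' : HasFDerivWithinAt ψ (ψ' x') Q x') (hx : x ∈ Q) (hu : u ∈ Q) :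
    g (x - u) ≤ 1 / γ * (bregman ψ ψ' u x - bregman ψ ψ' u x') + γ / (2 * σ) * ‖g‖ ^ 2 := by
  have hnext := hstep.apply_next_sub_le hψ.1 hψx' hu
  have hdivergence : 1 / γ * (σ / 2 * ‖x' - x‖ ^ 2) ≤ 1 / γ * bregman ψ ψ' x' x := by
    gcongr
    exact le_bregman_of_uniformConvexOn hψ hψx hstep.1 hx
  have hmove : g (x - x') ≤ γ / (2 * σ) * ‖g‖ ^ 2 + 1 / γ * (σ / 2 * ‖x' - x‖ ^ 2) := by
    rw [norm_sub_rev]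
    exact (apply_le_add_mul_sq_norm g (x - x') (div_pos hγ hσ)).trans_eq (by field_simp)
  rw [← sub_add_sub_cancel x x' u, map_add]
  linarith

theorem IsMirrorDescentStep.mem_of_mem_Icc {γ : ℕ → ℝ} {x : ℕ → E} {g : ℕ → E →L[ℝ] ℝ} {N : ℕ}
    (hx1 : x 1 ∈ Q)
    (hstep : ∀ k ∈ Set.Icc 1 N, IsMirrorDescentStep ψ ψ' Q (γ k) (g k) (x k) (x (k + 1))) :
    ∀ k ∈ Set.Icc 1 (N + 1), x k ∈ Q
  | 1, _ => hx1
  | k + 2, hk => (hstep (k + 1) ⟨by lia, Nat.le_of_succ_le_succ hk.2⟩).1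

theorem sum_mul_apply_sub_le_of_isMirrorDescentStep {σ R : ℝ} {N : ℕ} {γ ω : ℕ → ℝ} {x : ℕ → E}
    {g : ℕ → E →L[ℝ] ℝ} {u : E} (hσ : 0 < σ) (hψ : StrongConvexOn Q σ ψ) (hu : u ∈ Q) (hN : 1 ≤ N)
    (hψx : ∀ k ∈ Set.Icc 1 (N + 1), HasFDerivWithinAt ψ (ψ' (x k)) Q (x k))
    (hR : ∀ k ∈ Set.Icc 1 N, bregman ψ ψ' u (x k) ≤ R)
    (hγ : ∀ k ∈ Set.Icc 1 N, 0 < γ k) (hω : ∀ k ∈ Set.Icc 1 N, 0 ≤ ω k)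
    (hmono : MonotoneOn (fun k => ω k / γ k) (Set.Icc 1 N)) (hx1 : x 1 ∈ Q)
    (hstep : ∀ k ∈ Set.Icc 1 N, IsMirrorDescentStep ψ ψ' Q (γ k) (g k) (x k) (x (k + 1))) :
    ∑ k ∈ Icc 1 N, ω k * g k (x k - u) ≤
      R * ω N / γ N + ∑ k ∈ Icc 1 N, ω k * γ k / (2 * σ) * ‖g k‖ ^ 2 := by
  have hxQ := IsMirrorDescentStep.mem_of_mem_Icc hx1 hstep
  have hfirst : 1 ∈ Set.Icc 1 N := ⟨le_rfl, hN⟩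
  have hlast : N ∈ Set.Icc 1 N := ⟨hN, le_rfl⟩
  have hweight : ∀ k ∈ Set.Icc 1 N, 0 ≤ ω k / γ k := fun k hk => div_nonneg (hω k hk) (hγ k hk).le
  have hterm : ∀ k ∈ Icc 1 N, ω k * g k (x k - u) ≤
      ω k / γ k * (bregman ψ ψ' u (x k) - bregman ψ ψ' u (x (k + 1)))
        + ω k * γ k / (2 * σ) * ‖g k‖ ^ 2 := by
    intro k hk
    replace hk : k ∈ Set.Icc 1 N := mem_Icc.1 hk
    have hk₀ : k ∈ Set.Icc 1 (N + 1) := ⟨hk.1, hk.2.trans N.le_succ⟩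
    have hk₁ : k + 1 ∈ Set.Icc 1 (N + 1) := ⟨by lia, Nat.succ_le_succ hk.2⟩
    have hregret := (hstep k hk).apply_sub_le (hγ k hk) hσ hψ (hψx k hk₀) (hψx _ hk₁) (hxQ k hk₀) hu
    exact (mul_le_mul_of_nonneg_left hregret (hω k hk)).trans_eq (by ring)
  have hend : 0 ≤ bregman ψ ψ' u (x (N + 1)) := by
    have hN₁ : N + 1 ∈ Set.Icc 1 (N + 1) := ⟨by lia, le_rfl⟩
    exact le_trans (by positivity) (le_bregman_of_uniformConvexOn hψ (hψx _ hN₁) hu (hxQ _ hN₁))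
  have htelescope : ∑ k ∈ Icc 1 N,
      ω k / γ k * (bregman ψ ψ' u (x k) - bregman ψ ψ' u (x (k + 1))) ≤ R * ω N / γ N :=
    calc _ ≤ ω N / γ N * (R - bregman ψ ψ' u (x (N + 1))) :=
          sum_Icc_mul_sub_succ_le_of_monotoneOn (V := fun k => bregman ψ ψ' u (x k)) hN
            (hweight 1 hfirst) hmono hR
      _ ≤ ω N / γ N * R := mul_le_mul_of_nonneg_left (sub_le_self R hend) (hweight N hlast)
      _ = R * ω N / γ N := by ring
  refine (sum_le_sum hterm).trans ?_
  rw [sum_add_distrib]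
  gcongr

theorem weighted_telescoping_bound_general {σ R : ℝ} {N : ℕ} {γ ω : ℕ → ℝ} {x : ℕ → E}
    {f : E → ℝ} {gf : ℕ → E →L[ℝ] ℝ} {u : E} (hσ : 0 < σ) (hψ : StrongConvexOn Q σ ψ)
    (hu : u ∈ Q) (hN : 1 ≤ N)
    (hψx : ∀ k ∈ Set.Icc 1 (N + 1), HasFDerivWithinAt ψ (ψ' (x k)) Q (x k))
    (hR : ∀ k ∈ Set.Icc 1 N, bregman ψ ψ' u (x k) ≤ R)
    (hγ : ∀ k ∈ Set.Icc 1 N, 0 < γ k) (hω : ∀ k ∈ Set.Icc 1 N, 0 ≤ ω k)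
    (hmono : MonotoneOn (fun k => ω k / γ k) (Set.Icc 1 N)) (hx1 : x 1 ∈ Q)
    (hsub : ∀ k ∈ Set.Icc 1 N, IsSubgradientAt f Q (gf k) (x k))
    (hstep : ∀ k ∈ Set.Icc 1 N, IsMirrorDescentStep ψ ψ' Q (γ k) (gf k) (x k) (x (k + 1))) :
    ∑ k ∈ Icc 1 N, ω k * (f (x k) - f u) ≤
      R * ω N / γ N + ∑ k ∈ Icc 1 N, ω k * γ k / (2 * σ) * ‖gf k‖ ^ 2 := by
  refine (sum_le_sum fun k hk => ?_).trans
    (sum_mul_apply_sub_le_of_isMirrorDescentStep hσ hψ hu hN hψx hR hγ hω hmono hx1 hstep)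
  replace hk : k ∈ Set.Icc 1 N := mem_Icc.1 hk
  refine mul_le_mul_of_nonneg_left ?_ (hω k hk)
  have hgap := hsub k hk u hu
  rw [← neg_sub (x k) u, map_neg] at hgap
  linarith

end MirrorDescent

section Weights

/-- The paper's weight `ω_k^{(m)}` of the `k`-th mirror descent step (`k ≥ 1`) with step sizes `γ`,
chosen so that, for `m ≥ −1` and `γ` positive non-increasing, `ω_k^{(m)} / γ_k` is
non-decreasing. -/
noncomputable def mirrorDescentWeight (m : ℝ) (γ : ℕ → ℝ) (k : ℕ) : ℝ :=
  if m ≤ 0 then γ k ^ (-m) else (k : ℝ) ^ (m / 2)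

variable {m : ℝ} {γ : ℕ → ℝ}

theorem mirrorDescentWeight_nonneg {k : ℕ} (hγ : 0 ≤ γ k) : 0 ≤ mirrorDescentWeight m γ k := by
  unfold mirrorDescentWeight
  split_ifs <;> positivity

theorem monotoneOn_mirrorDescentWeight_div {s : Set ℕ} (hm : -1 ≤ m) (hpos : ∀ k ∈ s, 0 < γ k)
    (hγ : AntitoneOn γ s) : MonotoneOn (fun k => mirrorDescentWeight m γ k / γ k) s := by
  intro k hk l hl hkl
  have hγk := hpos k hk
  have hγl := hpos l hl
  have hle : γ l ≤ γ k := hγ hk hl hkl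
  simp only [mirrorDescentWeight]
  split_ifs with hm₀
  · rw [← Real.rpow_sub_one hγk.ne', ← Real.rpow_sub_one hγl.ne']
    exact Real.rpow_le_rpow_of_nonpos hγl hle (by linarith)
  · have hm₀' : 0 < m := not_le.1 hm₀
    gcongr

end Weights

/-- **Weighted telescoping bound.** For the mirror descent iterates with positive non-increasing
step sizes `γ_k`, weights `ω_k = γ_k^{−m}` (if `−1 ≤ m ≤ 0`) or `k^{m/2}` (if `m > 0`), and
`V_ψ(x*, x) ≤ R` on `Q`:
`∑_{k=1}^N ω_k (f(x^k) − f(x*)) ≤ R ω_N/γ_N + ∑_{k=1}^N (ω_k γ_k/(2σ)) ‖∇f(x^k)‖_*²`. -/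
theorem weighted_telescoping_bound
    {E : Type*} [NormedAddCommGroup E] [NormedSpace ℝ E] [FiniteDimensional ℝ E]
    (Q : Set E) (hQcomp : IsCompact Q) (hQconv : Convex ℝ Q)
    (ψ : E → ℝ) (ψ' : E → E →L[ℝ] ℝ) (σ : ℝ) (hσ : 0 < σ)
    (hψdiff : ∀ x ∈ Q, HasFDerivWithinAt ψ (ψ' x) Q x)
    (hψstrong : StrongConvexOn Q σ ψ)
    (f : E → ℝ) (hfconv : ConvexOn ℝ Q f) (hfcont : ContinuousOn f Q)
    (xstar : E) (hxstarQ : xstar ∈ Q) (hxstar : IsMinOn f Q xstar)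
    (R : ℝ) (hbound : ∀ x ∈ Q, bregman ψ ψ' xstar x ≤ R)
    (N : ℕ) (hN : 1 ≤ N) (m : ℝ) (hm : -1 ≤ m)
    (γ ω : ℕ → ℝ)
    (hγpos : ∀ k, 1 ≤ k → k ≤ N → 0 < γ k)
    (hγmono : ∀ k, 2 ≤ k → k ≤ N → γ k ≤ γ (k - 1))
    (hω : ∀ k, ω k = if m ≤ 0 then γ k ^ (-m) else (k : ℝ) ^ (m / 2))
    (x : ℕ → E) (gf : ℕ → E →L[ℝ] ℝ)
    (hx1 : x 1 ∈ Q)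
    (hsub : ∀ k, 1 ≤ k → k ≤ N → IsSubgradientAt f Q (gf k) (x k))
    (hstep : ∀ k, 1 ≤ k → k ≤ N → x (k + 1) ∈ Q ∧
      IsMinOn (fun z => gf k z + (1 / γ k) * bregman ψ ψ' z (x k)) Q (x (k + 1))) :
    ∑ k ∈ Finset.Icc 1 N, ω k * (f (x k) - f xstar) ≤
      R * ω N / γ N + ∑ k ∈ Finset.Icc 1 N, ω k * γ k / (2 * σ) * ‖gf k‖ ^ 2 := by
  obtain rfl : ω = mirrorDescentWeight m γ := funext hω
  have hstep' : ∀ k ∈ Set.Icc 1 N, IsMirrorDescentStep ψ ψ' Q (γ k) (gf k) (x k) (x (k + 1)) :=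
    fun k hk => hstep k hk.1 hk.2
  have hxQ := IsMirrorDescentStep.mem_of_mem_Icc hx1 hstep'
  have hpos : ∀ k ∈ Set.Icc 1 N, 0 < γ k := fun k hk => hγpos k hk.1 hk.2
  have hanti : AntitoneOn γ (Set.Icc 1 N) :=
    antitoneOn_of_add_one_le Set.ordConnected_Icc fun k _ hk hk' =>
      hγmono (k + 1) (Nat.succ_le_succ hk.1) hk'.2
  exact weighted_telescoping_bound_general hσ hψstrong hxstarQ hN
    (fun k hk => hψdiff _ (hxQ k hk))
    (fun k hk => hbound _ (hxQ k ⟨hk.1, hk.2.trans N.le_succ⟩)) hpos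
    (fun k hk => mirrorDescentWeight_nonneg (hpos k hk).le)
    (monotoneOn_mirrorDescentWeight_div hm hpos hanti) hx1
    (fun k hk => hsub k hk.1 hk.2) hstep'
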